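/- Suppose f satisfies the (2r,4r)-restricted strong convexity and smoothness properties with parameter δ ∈ [0,1). Fix Y* ∈ ℝ^{p×r}_*, set X* := Y*Y*ᵀ and N := sup{⟨B, ∇f(X*)⟩ : rank(B) ≤ r, ‖B‖_F ≤ 1}. (ii) If β > 1, γ > 0, δ ≤ ((β² − 1)/(4(1+γ)))·‖Y*‖²/‖X*‖_F, N ≤ ((β² − 1)/4)·‖Y*‖², and Y ∈ ℝ^{p×r}_* satisfies ‖Y‖ > β‖Y*‖ and ‖YYᵀ‖_F ≤ γ‖X*‖_F, then ‖2∇f(YYᵀ)Y‖_F ≥ ‖Y‖³ − ‖Y‖·‖Y*‖² > (β³ − β)‖Y*‖³. (iii) If γ > 1, δ ≤ (γ − 1)/(4(γ + 1)), N ≤ ((γ − 1)/4)·‖X*‖_F, and Y ∈ ℝ^{p×r}_* satisfies ‖YYᵀ‖_F > γ‖X*‖_F, then ‖2∇f(YYᵀ)Y‖_F > (γ − 1)·γ^{1/2}·‖X*‖_F^{3/2}/√r. -/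

import Mathlib

open Matrix

/-- Trace inner product `⟨A,B⟩ = tr(AᵀB)`. -/
noncomputable def trInner {m n : ℕ} (A B : Matrix (Fin m) (Fin n) ℝ) : ℝ :=
  ∑ i, ∑ j, A i j * B i j

/-- Frobenius norm. -/
noncomputable def frob {m n : ℕ} (A : Matrix (Fin m) (Fin n) ℝ) : ℝ :=
  Real.sqrt (∑ i, ∑ j, (A i j) ^ 2)

open scoped Classical in
/-- The `i`-th largest eigenvalue (1-indexed, `1 ≤ i ≤ n`) of a Hermitian matrix; junk value 0
otherwise. -/
noncomputable def eigVal {n : ℕ} (A : Matrix (Fin n) (Fin n) ℝ) (i : ℕ) : ℝ :=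
  if hA : A.IsHermitian then
    if h : n - i < n then hA.eigenvalues (Tuple.sort hA.eigenvalues ⟨n - i, h⟩) else 0
  else 0

/-- The `i`-th largest singular value (1-indexed) of `Y`, so `sval Y 1 = ‖Y‖` (spectral norm)
and `sval Y r` is the least singular value. -/
noncomputable def sval {p r : ℕ} (Y : Matrix (Fin p) (Fin r) ℝ) (i : ℕ) : ℝ :=
  Real.sqrt (eigVal (Yᵀ * Y) i)

/-- `Q` is an orthogonal matrix. -/
def IsOrtho {r : ℕ} (Q : Matrix (Fin r) (Fin r) ℝ) : Prop := Qᵀ * Q = 1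

/-- The quotient distance `d(Y₁,Y₂) = min_{Q ∈ O(r)} ‖Y₂Q − Y₁‖_F`. -/
noncomputable def dOrth {p r : ℕ} (Y₁ Y₂ : Matrix (Fin p) (Fin r) ℝ) : ℝ :=
  sInf {c | ∃ Q : Matrix (Fin r) (Fin r) ℝ, IsOrtho Q ∧ c = frob (Y₂ * Q - Y₁)}


section helpers

variable {m n : ℕ}

lemma le_of_sq_le {a b : ℝ} (h : a ^ 2 ≤ b ^ 2) (hb : 0 ≤ b) : a ≤ b := by
  by_contra hc
  push Not at hc
  nlinarith

lemma mat_rank_add_le (A B : Matrix (Fin m) (Fin n) ℝ) : (A + B).rank ≤ A.rank + B.rank := by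
  unfold Matrix.rank
  rw [Matrix.mulVecLin_add]
  refine (Submodule.finrank_mono (LinearMap.range_add_le _ _)).trans ?_
  exact Submodule.finrank_add_le_finrank_add_finrank _ _

lemma trInner_eq (A B : Matrix (Fin m) (Fin n) ℝ) : trInner A B = (Aᵀ * B).trace := by
  simp only [trInner, Matrix.trace, Matrix.diag, Matrix.mul_apply, Matrix.transpose_apply]
  exact Finset.sum_comm

lemma trInner_comm (A B : Matrix (Fin m) (Fin n) ℝ) : trInner A B = trInner B A := by
  simp only [trInner, mul_comm]

lemma trInner_add_right (A B C : Matrix (Fin m) (Fin n) ℝ) :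
    trInner A (B + C) = trInner A B + trInner A C := by
  simp only [trInner_eq, Matrix.mul_add, Matrix.trace_add]

lemma trInner_sub_right (A B C : Matrix (Fin m) (Fin n) ℝ) :
    trInner A (B - C) = trInner A B - trInner A C := by
  simp only [trInner_eq, Matrix.mul_sub, Matrix.trace_sub]

lemma trInner_smul_right (A B : Matrix (Fin m) (Fin n) ℝ) (c : ℝ) :
    trInner A (c • B) = c * trInner A B := by
  simp only [trInner_eq, Matrix.mul_smul, Matrix.trace_smul, smul_eq_mul]

lemma trInner_neg_right (A B : Matrix (Fin m) (Fin n) ℝ) :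
    trInner A (-B) = - trInner A B := by
  simp only [trInner_eq, Matrix.mul_neg, Matrix.trace_neg]

lemma trInner_add_left (A B C : Matrix (Fin m) (Fin n) ℝ) :
    trInner (A + B) C = trInner A C + trInner B C := by
  rw [trInner_comm, trInner_add_right, trInner_comm C A, trInner_comm C B]

lemma trInner_sub_left (A B C : Matrix (Fin m) (Fin n) ℝ) :
    trInner (A - B) C = trInner A C - trInner B C := by
  rw [trInner_comm, trInner_sub_right, trInner_comm C A, trInner_comm C B]

lemma trInner_smul_left (A B : Matrix (Fin m) (Fin n) ℝ) (c : ℝ) :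
    trInner (c • A) B = c * trInner A B := by
  rw [trInner_comm, trInner_smul_right, trInner_comm]

lemma frob_nonneg (A : Matrix (Fin m) (Fin n) ℝ) : 0 ≤ frob A := Real.sqrt_nonneg _

lemma frob_sq (A : Matrix (Fin m) (Fin n) ℝ) : frob A ^ 2 = trInner A A := by
  rw [frob, Real.sq_sqrt (by positivity)]
  simp only [trInner, sq]

lemma trInner_le (A B : Matrix (Fin m) (Fin n) ℝ) : trInner A B ≤ frob A * frob B := by
  have h := Finset.sum_mul_sq_le_sq_mul_sq (Finset.univ : Finset (Fin m × Fin n))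
    (fun x => A x.1 x.2) (fun x => B x.1 x.2)
  simp only [Fintype.sum_prod_type] at h
  have h2 : trInner A B ^ 2 ≤ (frob A * frob B) ^ 2 := by
    rw [mul_pow, frob_sq, frob_sq]
    simpa only [trInner, sq] using h
  exact le_of_sq_le h2 (mul_nonneg (frob_nonneg _) (frob_nonneg _))

lemma trInner_ge (A B : Matrix (Fin m) (Fin n) ℝ) : -(frob A * frob B) ≤ trInner A B := by
  have h := trInner_le A (-B)
  have h2 : frob (-B) = frob B := by simp [frob]
  rw [trInner_neg_right, h2] at h
  linarith

lemma frob_sub_le (A B : Matrix (Fin m) (Fin n) ℝ) : frob (A - B) ≤ frob A + frob B := by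
  refine le_of_sq_le ?_ (add_nonneg (frob_nonneg _) (frob_nonneg _))
  have := trInner_ge A B
  rw [frob_sq, trInner_sub_left, trInner_sub_right, trInner_sub_right, trInner_comm B A, add_sq,
    frob_sq, frob_sq]
  linarith

lemma frob_smul (A : Matrix (Fin m) (Fin n) ℝ) (c : ℝ) (hc : 0 ≤ c) :
    frob (c • A) = c * frob A := by
  have h : frob (c • A) ^ 2 = (c * frob A) ^ 2 := by
    rw [mul_pow, frob_sq, frob_sq, trInner_smul_left, trInner_smul_right]; ring
  exact (sq_eq_sq₀ (frob_nonneg _) (mul_nonneg hc (frob_nonneg _))).1 h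

lemma frob_eq_zero {A : Matrix (Fin m) (Fin n) ℝ} (h : frob A = 0) : A = 0 := by
  have h1 := frob_sq A
  rw [h] at h1
  have h2 : ∑ i, ∑ j, A i j * A i j = 0 := by simpa [trInner] using h1.symm
  have h4 := (Finset.sum_eq_zero_iff_of_nonneg
    (fun i _ => Finset.sum_nonneg fun j _ => mul_self_nonneg (A i j))).1 h2
  ext i j
  have h3 := (Finset.sum_eq_zero_iff_of_nonneg
    (fun j _ => mul_self_nonneg (A i j))).1 (h4 i (Finset.mem_univ _))
  simpa using h3 j (Finset.mem_univ _)

/-- One-dimensional Taylor upper bound. -/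
lemma taylor_upper (φ φ' φ'' : ℝ → ℝ) (c : ℝ) (h1 : ∀ t, HasDerivAt φ (φ' t) t)
    (h2 : ∀ t, HasDerivAt φ' (φ'' t) t) (hc : ∀ t, φ'' t ≤ c) :
    φ 1 ≤ φ 0 + φ' 0 + c / 2 := by
  have hd : ∀ t, HasDerivAt (fun t => φ' t - c * t) (φ'' t - c) t := fun t => by
    have := (h2 t).sub ((hasDerivAt_id t).const_mul c)
    rw [mul_one] at this
    exact this
  have anti : Antitone (fun t => φ' t - c * t) :=
    antitone_of_hasDerivAt_nonpos hd (fun t => by have := hc t; simp; linarith)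
  have hd2 : ∀ t, HasDerivAt (fun t => φ t - φ' 0 * t - c / 2 * t ^ 2)
      (φ' t - φ' 0 - c * t) t := fun t => by
    have := ((h1 t).sub ((hasDerivAt_id t).const_mul (φ' 0))).sub
      ((hasDerivAt_pow 2 t).const_mul (c / 2))
    have e : φ' t - φ' 0 * 1 - c / 2 * (((2 : ℕ) : ℝ) * t ^ (2 - 1)) = φ' t - φ' 0 - c * t := by
      norm_num; ring
    rw [e] at this
    exact this
  have anti2 : AntitoneOn (fun t => φ t - φ' 0 * t - c / 2 * t ^ 2) (Set.Icc 0 1) := by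
    refine antitoneOn_of_deriv_nonpos (convex_Icc 0 1)
      (fun t _ => (hd2 t).continuousAt.continuousWithinAt)
      (fun t _ => (hd2 t).differentiableAt.differentiableWithinAt) ?_
    intro t ht
    rw [interior_Icc] at ht
    rw [(hd2 t).deriv]
    have := anti ht.1.le
    simp at this
    linarith
  have := anti2 (Set.left_mem_Icc.2 zero_le_one) (Set.right_mem_Icc.2 zero_le_one) zero_le_one
  simp at this
  linarith

end helpers

section grad

variable {p r : ℕ}
    (f : Matrix (Fin p) (Fin p) ℝ → ℝ)
    (gradf : Matrix (Fin p) (Fin p) ℝ → Matrix (Fin p) (Fin p) ℝ)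
    (hessf : Matrix (Fin p) (Fin p) ℝ → Matrix (Fin p) (Fin p) ℝ → ℝ)

lemma line_bounds
    (hgradf : ∀ X D : Matrix (Fin p) (Fin p) ℝ,
      HasDerivAt (fun t : ℝ => f (X + t • D)) (trInner (gradf X) D) 0)
    (hhessf : ∀ X G : Matrix (Fin p) (Fin p) ℝ,
      HasDerivAt (fun t : ℝ => trInner (gradf (X + t • G)) G) (hessf X G) 0)
    (a b : ℝ) (x e : Matrix (Fin p) (Fin p) ℝ)
    (hb : ∀ t : ℝ, a ≤ hessf (x + t • e) e ∧ hessf (x + t • e) e ≤ b) :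
    f x + trInner (gradf x) e + a / 2 ≤ f (x + e) ∧
    f (x + e) ≤ f x + trInner (gradf x) e + b / 2 := by
  have h1 : ∀ t : ℝ, HasDerivAt (fun t : ℝ => f (x + t • e)) (trInner (gradf (x + t • e)) e) t := by
    intro t
    have h := hgradf (x + t • e) e
    have h' : HasDerivAt (fun s : ℝ => f (x + t • e + s • e)) (trInner (gradf (x + t • e)) e)
      (t - t) := by simpa using h
    have := h'.comp_sub_const t t
    simpa [add_assoc, ← add_smul] using this
  have h2 : ∀ t : ℝ, HasDerivAt (fun t : ℝ => trInner (gradf (x + t • e)) e)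
      (hessf (x + t • e) e) t := by
    intro t
    have h := hhessf (x + t • e) e
    have h' : HasDerivAt (fun s : ℝ => trInner (gradf (x + t • e + s • e)) e) (hessf (x + t • e) e)
      (t - t) := by simpa using h
    have := h'.comp_sub_const t t
    simpa [add_assoc, ← add_smul] using this
  have u := taylor_upper _ _ _ b h1 h2 (fun t => (hb t).2)
  have l := taylor_upper (fun t => - f (x + t • e)) _ _ (-a) (fun t => (h1 t).neg)
    (fun t => (h2 t).neg) (fun t => by have := (hb t).1; linarith)
  simp at u l
  constructor <;> linarith

/-- Restricted gradient comparison on a linear space of low-rank matrices. -/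
lemma grad_compare
    (hgradf : ∀ X D : Matrix (Fin p) (Fin p) ℝ,
      HasDerivAt (fun t : ℝ => f (X + t • D)) (trInner (gradf X) D) 0)
    (hhessf : ∀ X G : Matrix (Fin p) (Fin p) ℝ,
      HasDerivAt (fun t : ℝ => trInner (gradf (X + t • G)) G) (hessf X G) 0)
    (δ : ℝ) (S : Submodule ℝ (Matrix (Fin p) (Fin p) ℝ))
    (hS : ∀ X ∈ S, ∀ G ∈ S,
      (1 - δ) * (frob G) ^ 2 ≤ hessf X G ∧ hessf X G ≤ (1 + δ) * (frob G) ^ 2)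
    (x D B : Matrix (Fin p) (Fin p) ℝ) (hx : x ∈ S) (hD : D ∈ S) (hB : B ∈ S) :
    trInner D B - δ * (frob D * frob B) ≤ trInner (gradf (x + D) - gradf x) B := by
  have key : ∀ x ∈ S, ∀ e ∈ S,
      f x + trInner (gradf x) e + (1 - δ) * (frob e) ^ 2 / 2 ≤ f (x + e) ∧
      f (x + e) ≤ f x + trInner (gradf x) e + (1 + δ) * (frob e) ^ 2 / 2 := fun x hx e he =>
    line_bounds f gradf hessf hgradf hhessf _ _ x e
      (fun t => hS _ (S.add_mem hx (S.smul_mem t he)) _ he)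
  have par : ∀ t : ℝ, t * trInner D B - δ * (frob D ^ 2 / 4 + t ^ 2 * frob B ^ 2) ≤
      t * trInner (gradf (x + D) - gradf x) B := by
    intro t
    have hh : (1 / 2 : ℝ) • D ∈ S := S.smul_mem _ hD
    have htB : t • B ∈ S := S.smul_mem _ hB
    have hp := S.add_mem hh htB
    have hm := S.sub_mem hh htB
    have hy := S.add_mem hx hD
    have e1 := (key x hx _ hp).1
    have e2 := (key x hx _ hm).2
    have e3 := (key _ hy _ (S.neg_mem hm)).2
    have e4 := (key _ hy _ (S.neg_mem hp)).1
    have q1 : x + D + -((1 / 2 : ℝ) • D - t • B) = x + ((1 / 2 : ℝ) • D + t • B) := by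
      module
    have q2 : x + D + -((1 / 2 : ℝ) • D + t • B) = x + ((1 / 2 : ℝ) • D - t • B) := by
      module
    rw [q1] at e3
    rw [q2] at e4
    have hn : ∀ A : Matrix (Fin p) (Fin p) ℝ, frob (-A) = frob A := fun A => by simp [frob]
    rw [hn] at e3 e4
    simp only [frob_sq, trInner_neg_right, trInner_add_right, trInner_sub_right, trInner_add_left,
      trInner_sub_left, trInner_smul_left, trInner_smul_right, trInner_comm B D] at *
    nlinarith
  rcases (frob_nonneg B).eq_or_lt with h0 | h0
  · have : B = 0 := frob_eq_zero h0.symm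
    subst this
    simp [trInner, frob]
  rcases (frob_nonneg D).eq_or_lt with h1 | h1
  · have : D = 0 := frob_eq_zero h1.symm
    subst this
    simp [trInner, frob]
  have ht : 0 < frob D / (2 * frob B) := by positivity
  have := par (frob D / (2 * frob B))
  have e : frob D ^ 2 / 4 + (frob D / (2 * frob B)) ^ 2 * frob B ^ 2 =
      (frob D / (2 * frob B)) * (frob D * frob B) := by
    field_simp; ring
  rw [e] at this
  refine le_of_mul_le_mul_left ?_ ht
  linarith

/-- Lower bound for the pairing of the gradient at `YYᵀ` with `Y C Yᵀ`. -/
lemma grad_lower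
    (hgradf : ∀ X D : Matrix (Fin p) (Fin p) ℝ,
      HasDerivAt (fun t : ℝ => f (X + t • D)) (trInner (gradf X) D) 0)
    (hhessf : ∀ X G : Matrix (Fin p) (Fin p) ℝ,
      HasDerivAt (fun t : ℝ => trInner (gradf (X + t • G)) G) (hessf X G) 0)
    (δ : ℝ)
    (hRSCS : ∀ X G : Matrix (Fin p) (Fin p) ℝ, X.rank ≤ 2 * r → G.rank ≤ 4 * r →
      (1 - δ) * (frob G) ^ 2 ≤ hessf X G ∧ hessf X G ≤ (1 + δ) * (frob G) ^ 2)
    (Ystar Y : Matrix (Fin p) (Fin r) ℝ)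
    (X : Matrix (Fin p) (Fin p) ℝ) (hX : X = Ystar * Ystarᵀ)
    (N : ℝ) (hN : N = sSup {c : ℝ | ∃ B : Matrix (Fin p) (Fin p) ℝ,
      B.rank ≤ r ∧ frob B ≤ 1 ∧ c = trInner B (gradf X)})
    (C : Matrix (Fin r) (Fin r) ℝ) :
    trInner (Y * Yᵀ - X) (Y * C * Yᵀ) - δ * (frob (Y * Yᵀ - X) * frob (Y * C * Yᵀ))
      - N * frob (Y * C * Yᵀ) ≤ trInner (gradf (Y * Yᵀ)) (Y * C * Yᵀ) := by
  let L : (Matrix (Fin r) (Fin r) ℝ × Matrix (Fin r) (Fin r) ℝ) →ₗ[ℝ] Matrix (Fin p) (Fin p) ℝ :=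
    { toFun := fun c => Y * c.1 * Yᵀ + Ystar * c.2 * Ystarᵀ
      map_add' := fun a b => by
        simp only [Prod.fst_add, Prod.snd_add, Matrix.mul_add, Matrix.add_mul]; abel
      map_smul' := fun a b => by
        simp }
  have rk : ∀ (Z : Matrix (Fin p) (Fin r) ℝ) (C : Matrix (Fin r) (Fin r) ℝ),
      (Z * C * Zᵀ).rank ≤ r := fun Z C => by
    rw [Matrix.mul_assoc]
    exact (Matrix.rank_mul_le_left _ _).trans ((Matrix.rank_le_width Z))
  have hrank : ∀ Z ∈ LinearMap.range L, Z.rank ≤ 2 * r := by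
    rintro _ ⟨c, rfl⟩
    refine (mat_rank_add_le _ _).trans ?_
    have := rk Y c.1
    have := rk Ystar c.2
    omega
  have mB : ∀ C : Matrix (Fin r) (Fin r) ℝ, Y * C * Yᵀ ∈ LinearMap.range L := fun C => ⟨(C, 0), by simp [L]⟩
  have mY : Y * Yᵀ ∈ LinearMap.range L := by
    have := mB 1
    rwa [Matrix.mul_one] at this
  have mX : X ∈ LinearMap.range L := ⟨(0, 1), by simp [L, hX]⟩
  have h := grad_compare f gradf hessf hgradf hhessf δ (LinearMap.range L)
    (fun A hA G hG => hRSCS A G (hrank A hA) ((hrank G hG).trans (by omega)))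
    X (Y * Yᵀ - X) (Y * C * Yᵀ) mX (Submodule.sub_mem _ mY mX) (mB C)
  rw [add_sub_cancel, trInner_sub_left (gradf _)] at h
  have hNB : -(N * frob (Y * C * Yᵀ)) ≤ trInner (gradf X) (Y * C * Yᵀ) := by
    rcases (frob_nonneg (Y * C * Yᵀ)).eq_or_lt with h0 | h0
    · rw [← h0, frob_eq_zero h0.symm]; simp [trInner]
    have hle : trInner ((-(frob (Y * C * Yᵀ))⁻¹) • (Y * C * Yᵀ)) (gradf X) ≤ N := by
      rw [hN]
      refine le_csSup ⟨frob (gradf X), ?_⟩ ⟨_, ?_, ?_, rfl⟩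
      · rintro _ ⟨B, -, hB, rfl⟩
        refine (trInner_le _ _).trans ?_
        have := frob_nonneg (gradf X)
        nlinarith
      · have := rk Y ((-(frob (Y * C * Yᵀ))⁻¹) • C)
        simpa using this
      · have e : (-(frob (Y * C * Yᵀ))⁻¹) • (Y * C * Yᵀ) =
          -((frob (Y * C * Yᵀ))⁻¹ • (Y * C * Yᵀ)) := by module
        have hn : ∀ A : Matrix (Fin p) (Fin p) ℝ, frob (-A) = frob A := fun A => by simp [frob]
        rw [e, hn, frob_smul _ _ (inv_nonneg.2 h0.le), inv_mul_cancel₀ h0.ne']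
    rw [trInner_smul_left, trInner_comm] at hle
    have := mul_le_mul_of_nonneg_right hle h0.le
    have e : -(frob (Y * C * Yᵀ))⁻¹ * trInner (gradf X) (Y * C * Yᵀ) * frob (Y * C * Yᵀ) =
      - trInner (gradf X) (Y * C * Yᵀ) := by field_simp
    rw [e] at this
    linarith
  linarith

lemma grad_pair (G : Matrix (Fin p) (Fin p) ℝ) (Y : Matrix (Fin p) (Fin r) ℝ)
    (C : Matrix (Fin r) (Fin r) ℝ) :
    2 * trInner G (Y * C * Yᵀ) ≤ frob ((2 : ℝ) • (G * Y)) * frob (Y * C) := by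
  have h := trInner_le ((2 : ℝ) • (G * Y)) (Y * C)
  have e : trInner (G * Y) (Y * C) = trInner G (Y * C * Yᵀ) := by
    rw [trInner_eq, trInner_eq, Matrix.transpose_mul, Matrix.mul_assoc, Matrix.trace_mul_comm,
      Matrix.mul_assoc]
  rwa [trInner_smul_left, e] at h

lemma frob_transpose_mul (Y : Matrix (Fin p) (Fin r) ℝ) : frob (Yᵀ * Y) = frob (Y * Yᵀ) := by
  refine (sq_eq_sq₀ (frob_nonneg _) (frob_nonneg _)).1 ?_
  rw [frob_sq, frob_sq, trInner_eq, trInner_eq]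
  simp only [Matrix.transpose_mul, Matrix.transpose_transpose]
  rw [Matrix.mul_assoc, Matrix.trace_mul_comm]
  simp only [Matrix.mul_assoc]

lemma frob_sq_le (Y : Matrix (Fin p) (Fin r) ℝ) :
    frob Y ^ 2 ≤ Real.sqrt r * frob (Y * Yᵀ) := by
  rw [← frob_transpose_mul]
  have h1 : frob (1 : Matrix (Fin r) (Fin r) ℝ) = Real.sqrt r := by
    rw [frob]; congr 1
    simp [Matrix.one_apply]
  have h := trInner_le (1 : Matrix (Fin r) (Fin r) ℝ) (Yᵀ * Y)
  rw [h1] at h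
  rw [frob_sq, trInner_eq]
  rwa [trInner_eq, Matrix.transpose_one, Matrix.one_mul] at h

end grad

section spectral

variable {p r : ℕ}

lemma eigVal_spec (hr : 0 < r) (A : Matrix (Fin r) (Fin r) ℝ) (hA : A.IsHermitian) :
    (∃ v : Fin r → ℝ, v ⬝ᵥ v = 1 ∧ A *ᵥ v = eigVal A 1 • v) ∧
    ∀ w : Fin r → ℝ, w ⬝ᵥ (A *ᵥ w) ≤ eigVal A 1 * (w ⬝ᵥ w) := by
  have hlt : r - 1 < r := by omega
  have hval : eigVal A 1 = hA.eigenvalues (Tuple.sort hA.eigenvalues ⟨r - 1, hlt⟩) := by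
    unfold eigVal
    rw [dif_pos hA, dif_pos hlt]
  have hmax : ∀ i, hA.eigenvalues i ≤ eigVal A 1 := by
    intro i
    rw [hval]
    have := Tuple.monotone_sort hA.eigenvalues
      (show (Tuple.sort hA.eigenvalues).symm i ≤ ⟨r - 1, hlt⟩ from by
        rw [Fin.le_def]; have := ((Tuple.sort hA.eigenvalues).symm i).2; simp only; omega)
    simpa using this
  constructor
  · refine ⟨hA.eigenvectorBasis (Tuple.sort hA.eigenvalues ⟨r - 1, hlt⟩), ?_, ?_⟩
    · have := hA.eigenvectorBasis.orthonormal.1 (Tuple.sort hA.eigenvalues ⟨r - 1, hlt⟩)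
      rw [EuclideanSpace.norm_eq, Real.sqrt_eq_one] at this
      simpa [dotProduct, sq] using this
    · rw [hval]
      exact hA.mulVec_eigenvectorBasis _
  · intro w
    have hsp := hA.spectral_theorem
    rw [Unitary.conjStarAlgAut_apply] at hsp
    set U : Matrix (Fin r) (Fin r) ℝ := (hA.eigenvectorUnitary).1 with hU
    have hUU : U * Uᵀ = 1 := by
      have := Unitary.mul_star_self_of_mem hA.eigenvectorUnitary.2
      simpa [Matrix.star_eq_conjTranspose] using this
    have hA' : A = U * diagonal hA.eigenvalues * Uᵀ := by
      simpa [Matrix.star_eq_conjTranspose, Function.comp_def] using hsp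
    have e1 : w ⬝ᵥ (A *ᵥ w) = (Uᵀ *ᵥ w) ⬝ᵥ (diagonal hA.eigenvalues *ᵥ (Uᵀ *ᵥ w)) := by
      conv_lhs => rw [hA']
      rw [Matrix.mul_assoc, ← Matrix.mulVec_mulVec, Matrix.dotProduct_mulVec,
        ← Matrix.mulVec_transpose, ← Matrix.mulVec_mulVec]
    have e2 : w ⬝ᵥ w = (Uᵀ *ᵥ w) ⬝ᵥ (Uᵀ *ᵥ w) := by
      rw [Matrix.dotProduct_mulVec, ← Matrix.mulVec_transpose, Matrix.transpose_transpose,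
        Matrix.mulVec_mulVec, hUU, Matrix.one_mulVec]
    rw [e1, e2, dotProduct, dotProduct, Finset.mul_sum]
    refine Finset.sum_le_sum fun i _ => ?_
    rw [Matrix.mulVec_diagonal]
    nlinarith [mul_le_mul_of_nonneg_right (hmax i) (mul_self_nonneg ((Uᵀ *ᵥ w) i))]

lemma dot_gram (Y : Matrix (Fin p) (Fin r) ℝ) (w : Fin r → ℝ) :
    w ⬝ᵥ ((Yᵀ * Y) *ᵥ w) = (Y *ᵥ w) ⬝ᵥ (Y *ᵥ w) := by
  rw [← Matrix.mulVec_mulVec, Matrix.dotProduct_mulVec, Matrix.vecMul_transpose]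

lemma dot_self_nonneg {n : ℕ} (w : Fin n → ℝ) : 0 ≤ w ⬝ᵥ w :=
  Finset.sum_nonneg fun i _ => mul_self_nonneg (w i)

lemma sval_spec (hr : 0 < r) (Y : Matrix (Fin p) (Fin r) ℝ) :
    (∃ v : Fin r → ℝ, v ⬝ᵥ v = 1 ∧ (Yᵀ * Y) *ᵥ v = (sval Y 1) ^ 2 • v) ∧
    ∀ w : Fin r → ℝ, (Y *ᵥ w) ⬝ᵥ (Y *ᵥ w) ≤ (sval Y 1) ^ 2 * (w ⬝ᵥ w) := by
  have hA : (Yᵀ * Y).IsHermitian := by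
    simpa using Matrix.isHermitian_conjTranspose_mul_self Y
  obtain ⟨⟨v, hv, hv2⟩, hw⟩ := eigVal_spec hr _ hA
  have h0 : 0 ≤ eigVal (Yᵀ * Y) 1 := by
    have h := dot_gram Y v
    rw [hv2, dotProduct_smul, hv, smul_eq_mul, mul_one] at h
    rw [h]; exact dot_self_nonneg _
  have hs : (sval Y 1) ^ 2 = eigVal (Yᵀ * Y) 1 := Real.sq_sqrt h0
  rw [hs]
  exact ⟨⟨v, hv, hv2⟩, fun w => by rw [← dot_gram]; exact hw w⟩

lemma sval_transpose (hr : 0 < r) (Y : Matrix (Fin p) (Fin r) ℝ) (z : Fin p → ℝ) :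
    z ⬝ᵥ ((Y * Yᵀ) *ᵥ z) ≤ (sval Y 1) ^ 2 * (z ⬝ᵥ z) := by
  have e : z ⬝ᵥ ((Y * Yᵀ) *ᵥ z) = (Yᵀ *ᵥ z) ⬝ᵥ (Yᵀ *ᵥ z) := by
    have := dot_gram Yᵀ z
    rwa [Matrix.transpose_transpose] at this
  have h := (sval_spec hr Y).2 (Yᵀ *ᵥ z)
  rw [Matrix.mulVec_mulVec] at h
  have cs : (z ⬝ᵥ ((Y * Yᵀ) *ᵥ z)) ^ 2 ≤
      (z ⬝ᵥ z) * (((Y * Yᵀ) *ᵥ z) ⬝ᵥ ((Y * Yᵀ) *ᵥ z)) := by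
    have := Finset.sum_mul_sq_le_sq_mul_sq Finset.univ z ((Y * Yᵀ) *ᵥ z)
    simpa only [dotProduct, sq] using this
  rw [← e] at h
  have h0 : 0 ≤ z ⬝ᵥ ((Y * Yᵀ) *ᵥ z) := by rw [e]; exact dot_self_nonneg _
  have hz := dot_self_nonneg z
  rcases h0.eq_or_lt with h1 | h1
  · rw [← h1]; positivity
  · refine le_of_mul_le_mul_left ?_ h1
    nlinarith [mul_le_mul_of_nonneg_left h hz]

lemma frob_vecMulVec {m n : ℕ} (a : Fin m → ℝ) (b : Fin n → ℝ) :
    frob (vecMulVec a b) ^ 2 = (a ⬝ᵥ a) * (b ⬝ᵥ b) := by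
  rw [frob_sq, trInner, dotProduct, dotProduct, Finset.sum_mul_sum]
  refine Finset.sum_congr rfl fun i _ => Finset.sum_congr rfl fun j _ => ?_
  simp only [vecMulVec_apply]; ring

lemma trInner_vecMulVec {m : ℕ} (M : Matrix (Fin m) (Fin m) ℝ) (z : Fin m → ℝ) :
    trInner M (vecMulVec z z) = z ⬝ᵥ (M *ᵥ z) := by
  simp only [trInner, dotProduct, Matrix.mulVec, Finset.mul_sum, vecMulVec_apply]
  refine Finset.sum_congr rfl fun i _ => Finset.sum_congr rfl fun j _ => ?_
  ring

end spectral

set_option maxHeartbeats 1000000 in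
/-- large gradient of `h` in the remaining regions: strict lower bounds on
the lifted Riemannian gradient of `h([Y]) = f(YYᵀ)` when the spectral norm of `Y` or the
Frobenius norm of `Y Yᵀ` is large. -/
theorem stmt16 {p r : ℕ}
    (f : Matrix (Fin p) (Fin p) ℝ → ℝ)
    (gradf : Matrix (Fin p) (Fin p) ℝ → Matrix (Fin p) (Fin p) ℝ)
    (hessf : Matrix (Fin p) (Fin p) ℝ → Matrix (Fin p) (Fin p) ℝ → ℝ)
    (hgradf : ∀ X D : Matrix (Fin p) (Fin p) ℝ,
      HasDerivAt (fun t : ℝ => f (X + t • D)) (trInner (gradf X) D) 0)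
    (hhessf : ∀ X G : Matrix (Fin p) (Fin p) ℝ,
      HasDerivAt (fun t : ℝ => trInner (gradf (X + t • G)) G) (hessf X G) 0)
    (δ : ℝ) (hδ0 : 0 ≤ δ) (hδ1 : δ < 1)
    (hRSCS : ∀ X G : Matrix (Fin p) (Fin p) ℝ, X.rank ≤ 2 * r → G.rank ≤ 4 * r →
      (1 - δ) * (frob G) ^ 2 ≤ hessf X G ∧ hessf X G ≤ (1 + δ) * (frob G) ^ 2)
    (Ystar : Matrix (Fin p) (Fin r) ℝ) (hYs : Ystar.rank = r)
    (X : Matrix (Fin p) (Fin p) ℝ) (hX : X = Ystar * Ystarᵀ)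
    (N : ℝ) (hN : N = sSup {c : ℝ | ∃ B : Matrix (Fin p) (Fin p) ℝ,
      B.rank ≤ r ∧ frob B ≤ 1 ∧ c = trInner B (gradf X)})
 :
    (∀ β γ : ℝ, 1 < β → 0 < γ →
      δ ≤ (β ^ 2 - 1) / (4 * (1 + γ)) * ((sval Ystar 1) ^ 2 / frob X) →
      N ≤ (β ^ 2 - 1) / 4 * (sval Ystar 1) ^ 2 →
      ∀ Y : Matrix (Fin p) (Fin r) ℝ, Y.rank = r →
        sval Y 1 > β * sval Ystar 1 → frob (Y * Yᵀ) ≤ γ * frob X →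
        frob ((2 : ℝ) • (gradf (Y * Yᵀ) * Y)) ≥
          (sval Y 1) ^ 3 - sval Y 1 * (sval Ystar 1) ^ 2 ∧
        (sval Y 1) ^ 3 - sval Y 1 * (sval Ystar 1) ^ 2 >
          (β ^ 3 - β) * (sval Ystar 1) ^ 3) ∧
    (∀ γ : ℝ, 1 < γ →
      δ ≤ (γ - 1) / (4 * (γ + 1)) →
      N ≤ (γ - 1) / 4 * frob X →
      ∀ Y : Matrix (Fin p) (Fin r) ℝ, Y.rank = r →
        frob (Y * Yᵀ) > γ * frob X →
        frob ((2 : ℝ) • (gradf (Y * Yᵀ) * Y)) >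
          (γ - 1) * Real.sqrt γ * (frob X * Real.sqrt (frob X)) / Real.sqrt r) := by
  constructor
  · intro β γ hβ hγ hδ hNb Y hY hsY hfY
    have hr : 0 < r := by
      rcases Nat.eq_zero_or_pos r with h | h
      · subst h
        simp [sval, eigVal] at hsY
      · exact h
    have hs0 : 0 ≤ sval Ystar 1 := Real.sqrt_nonneg _
    have hσ0 : 0 ≤ sval Y 1 := Real.sqrt_nonneg _
    obtain ⟨⟨v, hv, hv2⟩, -⟩ := sval_spec hr Y
    have hz : (Y *ᵥ v) ⬝ᵥ (Y *ᵥ v) = (sval Y 1) ^ 2 := by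
      rw [← dot_gram, hv2, dotProduct_smul, hv, smul_eq_mul, mul_one]
    have hB : Y * vecMulVec v v * Yᵀ = vecMulVec (Y *ᵥ v) (Y *ᵥ v) := by
      rw [Matrix.mul_vecMulVec, Matrix.vecMulVec_mul, Matrix.vecMul_transpose]
    have hZ : Y * vecMulVec v v = vecMulVec (Y *ᵥ v) v := Matrix.mul_vecMulVec _ _ _
    have h1 := grad_lower f gradf hessf hgradf hhessf δ hRSCS Ystar Y X hX N hN (vecMulVec v v)
    have h2 := grad_pair (gradf (Y * Yᵀ)) Y (vecMulVec v v)
    have hfB : frob (Y * vecMulVec v v * Yᵀ) = (sval Y 1) ^ 2 := by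
      refine (sq_eq_sq₀ (frob_nonneg _) (by positivity)).1 ?_
      rw [hB, frob_vecMulVec, hz]; ring
    have hfZ : frob (Y * vecMulVec v v) = sval Y 1 := by
      refine (sq_eq_sq₀ (frob_nonneg _) hσ0).1 ?_
      rw [hZ, frob_vecMulVec, hz, hv, mul_one]
    have hi1 : trInner (Y * Yᵀ) (Y * vecMulVec v v * Yᵀ) = (sval Y 1) ^ 4 := by
      have e := dot_gram Yᵀ (Y *ᵥ v)
      rw [Matrix.transpose_transpose, Matrix.mulVec_mulVec _ Yᵀ, hv2] at e
      rw [hB, trInner_vecMulVec, e, dotProduct_smul, smul_dotProduct, hv]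
      simp only [smul_eq_mul]; ring
    have hi2 : trInner X (Y * vecMulVec v v * Yᵀ) ≤ (sval Ystar 1) ^ 2 * (sval Y 1) ^ 2 := by
      rw [hB, trInner_vecMulVec, hX, ← hz]
      exact sval_transpose hr Ystar _
    rw [hfB, trInner_sub_left, hi1] at h1
    rw [hfZ] at h2
    have hD : frob (Y * Yᵀ - X) ≤ (1 + γ) * frob X := by
      have := frob_sub_le (Y * Yᵀ) X
      linarith
    have hδD : δ * frob (Y * Yᵀ - X) ≤ (β ^ 2 - 1) / 4 * (sval Ystar 1) ^ 2 := by
      refine (mul_le_mul_of_nonneg_left hD hδ0).trans ?_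
      have hb : 0 ≤ β ^ 2 - 1 := by nlinarith
      rcases (frob_nonneg X).eq_or_lt with hx | hx
      · rw [← hx, mul_zero, mul_zero]; positivity
      · refine (mul_le_mul_of_nonneg_right hδ (by positivity)).trans (le_of_eq ?_)
        field_simp
    have hσpos : 0 < sval Y 1 := lt_of_le_of_lt (by positivity) hsY
    generalize hs : sval Ystar 1 = s at *
    generalize hσ : sval Y 1 = σ at *
    generalize hg : frob ((2 : ℝ) • (gradf (Y * Yᵀ) * Y)) = g at *
    have hsq : β ^ 2 * s ^ 2 ≤ σ ^ 2 := by
      have := pow_le_pow_left₀ (mul_nonneg (zero_le_one.trans hβ.le) hs0) hsY.le 2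
      rwa [mul_pow] at this
    constructor
    · have h3 : σ * (σ ^ 3 - σ * s ^ 2) ≤ σ * g := by
        have hσ2 : 0 ≤ σ ^ 2 := by positivity
        have a1 := mul_le_mul_of_nonneg_right hδD hσ2
        have a2 := mul_le_mul_of_nonneg_right hNb hσ2
        have a3 := mul_le_mul_of_nonneg_right hsq hσ2
        nlinarith
      exact le_of_mul_le_mul_left h3 hσpos
    · have b0 : 0 ≤ β * s := mul_nonneg (zero_le_one.trans hβ.le) hs0
      have b1 : 0 ≤ (β ^ 2 - 1) * s ^ 2 := mul_nonneg (by nlinarith) (sq_nonneg _)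
      have b5 : (β * s) ^ 2 < σ ^ 2 := pow_lt_pow_left₀ hsY b0 two_ne_zero
      have b2 : (β ^ 2 - 1) * s ^ 2 < σ ^ 2 - s ^ 2 := by linarith
      have b3 : β * s * ((β ^ 2 - 1) * s ^ 2) ≤ σ * ((β ^ 2 - 1) * s ^ 2) :=
        mul_le_mul_of_nonneg_right hsY.le b1
      have b4 := mul_lt_mul_of_pos_left b2 hσpos
      linarith
  · intro γ hγ hδ hNb Y hY hfY
    have hr : 0 < r := by
      rcases Nat.eq_zero_or_pos r with h | h
      · subst h
        subst hX
        simp [frob, Matrix.mul_apply] at hfY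
      · exact h
    have h1 := grad_lower f gradf hessf hgradf hhessf δ hRSCS Ystar Y X hX N hN 1
    have h2 := grad_pair (gradf (Y * Yᵀ)) Y 1
    have h3 := frob_sq_le Y
    rw [Matrix.mul_one] at h1 h2
    rw [trInner_sub_left, ← frob_sq] at h1
    have h4 := trInner_le X (Y * Yᵀ)
    have h5 := frob_sub_le (Y * Yᵀ) X
    have hx0 := frob_nonneg X
    have hy0 := frob_nonneg Y
    have hg0 := frob_nonneg ((2 : ℝ) • (gradf (Y * Yᵀ) * Y))
    generalize frob ((2 : ℝ) • (gradf (Y * Yᵀ) * Y)) = g at *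
    generalize frob (Y * Yᵀ) = a at *
    generalize frob X = x at *
    generalize frob Y = y at *
    generalize frob (Y * Yᵀ - X) = d at *
    generalize trInner (gradf (Y * Yᵀ)) (Y * Yᵀ) = T at *
    generalize trInner X (Y * Yᵀ) = U at *
    have hγ0 : 0 < γ := by linarith
    have ha : 0 < a := lt_of_le_of_lt (by positivity) hfY
    have hxa : γ * x ≤ a := hfY.le
    -- the error terms, multiplied by `4γ`
    have c1 : 4 * γ * (δ * d) ≤ (γ - 1) * a := by
      have k1 : δ * d ≤ δ * (a + x) := mul_le_mul_of_nonneg_left h5 hδ0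
      have k2 : δ * (a + x) ≤ (γ - 1) / (4 * (γ + 1)) * (a + x) :=
        mul_le_mul_of_nonneg_right hδ (by positivity)
      have k3 : 4 * γ * ((γ - 1) / (4 * (γ + 1)) * (a + x)) =
          (γ - 1) / (γ + 1) * (γ * (a + x)) := by field_simp
      have k4 : (γ - 1) / (γ + 1) * (γ * (a + x)) ≤ (γ - 1) / (γ + 1) * ((γ + 1) * a) :=
        mul_le_mul_of_nonneg_left (by linarith) (div_nonneg (by linarith) (by linarith))
      have k5 : (γ - 1) / (γ + 1) * ((γ + 1) * a) = (γ - 1) * a := by field_simp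
      have k6 := mul_le_mul_of_nonneg_left (k1.trans k2) (show 0 ≤ 4 * γ by linarith)
      linarith
    have c2 : 4 * γ * N ≤ (γ - 1) * a := by
      have := mul_le_mul_of_nonneg_left hNb (show 0 ≤ 4 * γ by linarith)
      have := mul_le_mul_of_nonneg_left hxa (show 0 ≤ γ - 1 by linarith)
      nlinarith
    have c3 : (γ - 1) * a ^ 2 ≤ γ * (g * y) := by
      have k1 := mul_le_mul_of_nonneg_right c1 ha.le
      have k2 := mul_le_mul_of_nonneg_right c2 ha.le
      have k3 := mul_le_mul_of_nonneg_right hxa ha.le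
      have k4 := mul_le_mul_of_nonneg_left h1 (show 0 ≤ 4 * γ by linarith)
      have k5 := mul_le_mul_of_nonneg_left h2 (show 0 ≤ 2 * γ by linarith)
      have k6 := mul_le_mul_of_nonneg_left h4 (show 0 ≤ 4 * γ by linarith)
      nlinarith
    have hr1 : (1 : ℝ) ≤ r := by exact_mod_cast hr
    have hq1 : 1 ≤ Real.sqrt r := by rw [Real.le_sqrt] <;> norm_num; exact hr
    have hqq : Real.sqrt r ^ 2 = r := Real.sq_sqrt (by positivity)
    generalize Real.sqrt (r : ℝ) = q at *
    have hq0 : 0 < q := by linarith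
    -- `y ≤ q * √a`
    have hsa : Real.sqrt a ^ 2 = a := Real.sq_sqrt ha.le
    have hsa0 : 0 < Real.sqrt a := Real.sqrt_pos.2 ha
    have hy : y ≤ q * Real.sqrt a := by
      refine le_of_sq_le ?_ (by positivity)
      rw [mul_pow, hsa]
      refine h3.trans ?_
      nlinarith
    have hlt : Real.sqrt γ * Real.sqrt x < Real.sqrt a := by
      rw [← Real.sqrt_mul hγ0.le]
      exact Real.sqrt_lt_sqrt (by positivity) hfY
    rw [gt_iff_lt, div_lt_iff₀ hq0]
    generalize hA : Real.sqrt a = A at *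
    have c4 : (γ - 1) * (a * A) ≤ γ * (g * q) := by
      have k := mul_le_mul_of_nonneg_left hy (mul_nonneg hγ0.le hg0)
      refine le_of_mul_le_mul_right ?_ hsa0
      calc (γ - 1) * (a * A) * A = (γ - 1) * a ^ 2 := by rw [← hsa]; ring
        _ ≤ γ * (g * y) := c3
        _ ≤ γ * (g * q) * A := by linarith
    have c5 : γ * x * (Real.sqrt γ * Real.sqrt x) < a * A := by
      calc γ * x * (Real.sqrt γ * Real.sqrt x) ≤ a * (Real.sqrt γ * Real.sqrt x) :=
            mul_le_mul_of_nonneg_right hxa (by positivity)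
        _ < a * A := mul_lt_mul_of_pos_left hlt ha
    have c6 := mul_lt_mul_of_pos_left c5 (show 0 < γ - 1 by linarith)
    refine lt_of_mul_lt_mul_left ?_ hγ0.le
    calc γ * ((γ - 1) * Real.sqrt γ * (x * Real.sqrt x))
        = (γ - 1) * (γ * x * (Real.sqrt γ * Real.sqrt x)) := by ring
      _ < (γ - 1) * (a * A) := c6
      _ ≤ γ * (g * q) := c4
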